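/- Let X be a Peano continuum without cut points which admits no essential map to the circle, and let 𝓐 be a collection of connected closed subsets of X, each containing at least two points, such that 𝓐 is null and fine. For E ∈ 𝓐 let ℷ(E) denote the union of all C ∈ 𝓐 for which there is a crossing sequence in 𝓐 from E to C, and for e ∈ E ∈ 𝓐 set ℷ(e) = ℷ(E) (this is well defined: any two elements of 𝓐 containing e intersect, hence cross, so they have the same cross-component). Then for each e ∈ ∪𝓐 there exists a neighborhood basis at e in X consisting of connected open sets U with boundary ∂U ⊆ ℷ(e). -/

import Mathlib

/-!
The members of `𝓐` are connected, so two of them cross exactly when they meet: a connected set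
disjoint from `B` lies in one component of `Bᶜ`. Hence the cross-component `K` of `E` is the class of
`E` under chains of successively intersecting members, its union `ℷ = ⋃₀ K` is connected, and
members of `𝓐` outside `K` are disjoint from `ℷ`.

Since `X` admits no essential map to the circle, it has the Janiszewski property
(`SepPts.of_union`): if the union of two disjoint closed sets separates two points, one of the
two sets does. Splitting a finite separating family from fineness into its part in `K` and the rest,
which misses the connected set `ℷ`, shows that a point of `ℷ` is separated from any other point of
`closure ℷ` by finitely many members of `K` (`exists_sepPts_of_mem_closure`).

Let `V` be a component of `(closure ℷ)ᶜ`. Having no cut points forces `frontier V` to have more than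
one point, and two points of `frontier V` cannot be separated by a subset of `ℷ`, because `V` misses
`ℷ`. So `frontier V` misses `ℷ` (`notMem_frontier_component`), and by compactness finitely many members
of `K` separate `e ∈ ℷ` from all of `frontier V`, hence from `V`. Thus finitely many
members of `K` separate `e` from any other point (`exists_sepPts`). A last compactness argument, on
the frontier of a neighborhood of `e`, yields finitely many members of `K` such that the component of
`e` in the complement of their union is contained in that neighborhood; its frontier lies in `ℷ`.
-/

open Set Filter Topology Pointwise

/-- The set `E` separates the points `x` and `y`: both lie outside `E` and in
different connected components of the complement of `E`. -/
def SepPts {X : Type*} [TopologicalSpace X] (E : Set X) (x y : X) : Prop :=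
  x ∉ E ∧ y ∉ E ∧ connectedComponentIn Eᶜ x ≠ connectedComponentIn Eᶜ y

/-- The set `E` separates the set `Y ⊆ X \ E`: two points of `Y` lie in different
connected components of the complement of `E`. -/
def SepSet {X : Type*} [TopologicalSpace X] (E Y : Set X) : Prop :=
  Y ⊆ Eᶜ ∧ ∃ x ∈ Y, ∃ y ∈ Y, connectedComponentIn Eᶜ x ≠ connectedComponentIn Eᶜ y

/-- Two (closed) sets `A` and `B` cross: they intersect, or each separates the other. -/
def Crosses {X : Type*} [TopologicalSpace X] (A B : Set X) : Prop :=
  (A ∩ B).Nonempty ∨ (SepSet A B ∧ SepSet B A)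

/-- There is a (finite) crossing sequence in `𝓐` from `A` to `B`. -/
def CrossSeqFromTo {X : Type*} [TopologicalSpace X] (𝓐 : Set (Set X)) (A B : Set X) : Prop :=
  ∃ (n : ℕ) (c : ℕ → Set X), c 0 = A ∧ c n = B ∧ (∀ i ≤ n, c i ∈ 𝓐) ∧
    ∀ i < n, Crosses (c i) (c (i + 1))

/-- A collection `𝓐` is cross-connected: any two of its elements are joined by a
crossing sequence in `𝓐`. -/
def CrossConnected {X : Type*} [TopologicalSpace X] (𝓐 : Set (Set X)) : Prop :=
  ∀ A ∈ 𝓐, ∀ B ∈ 𝓐, CrossSeqFromTo 𝓐 A B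

/-- There is a crossing sequence `A, A_1, …, A_n, B` in `𝓐` (with `n ≥ 1`) whose
intermediate terms `A_1, …, A_n` are disjoint from `D`. -/
def CrossSeqAvoiding {X : Type*} [TopologicalSpace X] (𝓐 : Set (Set X)) (A B D : Set X) :
    Prop :=
  ∃ n : ℕ, 1 ≤ n ∧ ∃ c : ℕ → Set X, c 0 = A ∧ c (n + 1) = B ∧ (∀ i ≤ n + 1, c i ∈ 𝓐) ∧
    (∀ i ≤ n, Crosses (c i) (c (i + 1))) ∧ ∀ i, 1 ≤ i → i ≤ n → c i ∩ D = ∅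

/-- A collection of subsets of a metric space is null if for every `ε > 0` only finitely
many of its members have diameter greater than `ε`. -/
def NullFam {X : Type*} [PseudoMetricSpace X] (𝓐 : Set (Set X)) : Prop :=
  ∀ ε : ℝ, 0 < ε → {A ∈ 𝓐 | ε < Metric.diam A}.Finite

/-- A collection `𝓐` is fine if any two distinct points are separated by the union of
some finite subcollection of `𝓐`. -/
def FineFam {X : Type*} [PseudoMetricSpace X] (𝓐 : Set (Set X)) : Prop :=
  ∀ x y : X, x ≠ y → ∃ 𝓑 ⊆ 𝓐, 𝓑.Finite ∧ SepPts (⋃₀ 𝓑) x y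

/-- A sequence of maps `T i : X → X` acts as a convergence sequence on the subset `A`,
with repeller `n ∈ A` and attractor `p ∈ A`: for every compact `C ⊆ A \ {n}` and every
open neighborhood `U` of `p`, eventually `T i '' C ⊆ U`. -/
def ConvSeqOn {X : Type*} [TopologicalSpace X] (A : Set X) (T : ℕ → X → X) (n p : X) :
    Prop :=
  n ∈ A ∧ p ∈ A ∧ ∀ C : Set X, C ⊆ A → IsCompact C → n ∉ C →
    ∀ U : Set X, IsOpen U → p ∈ U → ∀ᶠ i in atTop, T i '' C ⊆ U

/-- The stabilizer of a subset `A ⊆ X` in `G`. -/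
def stab (G : Type*) {X : Type*} [Group G] [MulAction G X] (A : Set X) : Set G :=
  {g : G | g • A = A}

/-- The subset `S` of the group `G` acts as a convergence group on `A ⊆ X`: every
sequence of distinct elements of `S` has a subsequence acting as a convergence
sequence on `A`. -/
def ConvGroupOn {G X : Type*} [Group G] [MulAction G X] [TopologicalSpace X]
    (S : Set G) (A : Set X) : Prop :=
  ∀ g : ℕ → G, (∀ i, g i ∈ S) → Function.Injective g →
    ∃ k : ℕ → ℕ, StrictMono k ∧ ∃ n p : X,
      ConvSeqOn A (fun i => (g (k i) • · : X → X)) n p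

/-- `(G, 𝓐)` is a local convergence pairing on `X`. -/
structure IsLocalConvPairing (G : Type*) {X : Type*} [Group G] [MulAction G X]
    [MetricSpace X] (𝓐 : Set (Set X)) : Prop where
  closed : ∀ A ∈ 𝓐, IsClosed A
  invariant : ∀ g : G, ∀ A ∈ 𝓐, g • A ∈ 𝓐
  big : ∀ A ∈ 𝓐, 2 < A.encard
  null : NullFam 𝓐
  fine : FineFam 𝓐
  stabConv : ∀ A ∈ 𝓐, ConvGroupOn (stab G A) A
  connect : ∀ A ∈ 𝓐, ∀ B ∈ 𝓐, (A ∩ B).encard ≤ 2 →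
    (∀ c : X, A ∩ B = {c} → ∀ b ∈ B, b ≠ c → CrossSeqAvoiding 𝓐 A B {b, c}) ∧
    ((¬ ∃ c : X, A ∩ B = {c}) → CrossSeqAvoiding 𝓐 A B (A ∩ B))

/-! ### Components of complements -/

section Components

variable {X : Type*} [TopologicalSpace X]

theorem isClosed_sUnion_of_finite {𝓑 : Set (Set X)} (hfin : 𝓑.Finite)
    (h : ∀ C ∈ 𝓑, IsClosed C) : IsClosed (⋃₀ 𝓑) := by
  rw [sUnion_eq_biUnion]
  exact hfin.isClosed_biUnion h

theorem SepPts.notMem_of_isPreconnected {S T : Set X} {x y : X} (h : SepPts S x y)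
    (hT : IsPreconnected T) (hTS : Disjoint T S) (hx : x ∈ T) : y ∉ T := fun hy =>
  h.2.2 (connectedComponentIn_eq
    (hT.subset_connectedComponentIn hx (disjoint_left.mp hTS) hy))

theorem sepPts_of_notMem {S : Set X} {x y : X} (hx : x ∉ S) (hy : y ∉ S)
    (h : y ∉ connectedComponentIn Sᶜ x) : SepPts S x y :=
  ⟨hx, hy, fun heq => h (heq ▸ mem_connectedComponentIn hy)⟩

theorem mem_component_of_not_sepPts {S : Set X} {x y : X} (hx : x ∉ S) (hy : y ∉ S)
    (h : ¬ SepPts S x y) : y ∈ connectedComponentIn Sᶜ x := by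
  by_contra hc
  exact h (sepPts_of_notMem hx hy hc)

theorem frontier_connectedComponentIn_subset [LocallyConnectedSpace X] {S : Set X}
    (hS : IsClosed S) (x : X) : frontier (connectedComponentIn Sᶜ x) ⊆ S := by
  intro z hz
  by_contra hzS
  have hzo : IsOpen (connectedComponentIn Sᶜ z) := hS.isOpen_compl.connectedComponentIn
  have hxo : IsOpen (connectedComponentIn Sᶜ x) := hS.isOpen_compl.connectedComponentIn
  have hzz : z ∈ connectedComponentIn Sᶜ z := mem_connectedComponentIn hzS
  rw [hxo.frontier_eq] at hz
  obtain ⟨w, hwz, hwx⟩ := mem_closure_iff.mp hz.1 _ hzo hzz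
  apply hz.2
  rw [connectedComponentIn_eq hwx, ← connectedComponentIn_eq hwz]
  exact hzz

theorem IsPreconnected.subset_of_disjoint_frontier {S U : Set X} (hS : IsPreconnected S)
    (hU : IsOpen U) (hd : Disjoint S (frontier U)) (hne : (S ∩ U).Nonempty) : S ⊆ U := by
  refine hS.subset_left_of_subset_union hU isClosed_closure.isOpen_compl
    (disjoint_compl_right.mono_left subset_closure) ?_ hne
  intro z hz
  by_cases hzU : z ∈ U
  · exact Or.inl hzU
  · refine Or.inr fun hzc => disjoint_left.mp hd hz ?_
    rw [hU.frontier_eq]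
    exact ⟨hzc, hzU⟩

end Components

/-! ### The Janiszewski property -/

theorem exists_lift_of_nullhomotopic {X : Type*} [TopologicalSpace X] {f : C(X, Circle)}
    (hf : f.Nullhomotopic) : ∃ θ : C(X, ℝ), ∀ x, Circle.exp (θ x) = f x := by
  obtain ⟨y, hy⟩ := hf
  obtain ⟨H⟩ := hy.symm
  have h0 : ∀ a, H.toContinuousMap (0, a) =
      Circle.exp ((ContinuousMap.const X (Complex.arg y)) a) := by
    intro a
    simp
  let L := Circle.isCoveringMap_exp.liftHomotopy H.toContinuousMap _ h0
  refine ⟨L.comp ((ContinuousMap.const X 1).prodMk (ContinuousMap.id X)), fun x => ?_⟩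
  have := congr_fun (Circle.isCoveringMap_exp.liftHomotopy_lifts H.toContinuousMap _ h0) (1, x)
  simpa [L] using this

theorem eq_of_circle_exp_eq {X : Type*} [TopologicalSpace X] {S : Set X} (hS : IsPreconnected S)
    {φ ψ : X → ℝ} (hφ : ContinuousOn φ S) (hψ : ContinuousOn ψ S)
    (h : ∀ z ∈ S, Circle.exp (φ z) = Circle.exp (ψ z)) {x y : X} (hx : x ∈ S) (hy : y ∈ S) :
    φ x - ψ x = φ y - ψ y := by
  have hT : IsDiscrete (AddSubgroup.zmultiples (2 * Real.pi) : Set ℝ) :=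
    isDiscrete_iff_discreteTopology.mpr
      (inferInstanceAs (DiscreteTopology (AddSubgroup.zmultiples (2 * Real.pi))))
  refine hS.constant_of_mapsTo hT (f := fun z => φ z - ψ z) (hφ.sub hψ) ?_ hx hy
  intro z hz
  have h1 : Circle.exp (φ z - ψ z) = 1 := by
    rw [Circle.exp_sub, h z hz, div_self']
  obtain ⟨n, hn⟩ := Circle.exp_eq_one.mp h1
  exact ⟨n, by simp [hn]⟩

open Classical in
/-- Janiszewski property of a space without essential maps to the circle. Let `Q` be the component
of `y` off `A ∪ B` and `g` a Urysohn function, `0` on `A` and `1` on `B`. The circle-valued map equal to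
`exp (-iπg)` on `Q` and to `exp (iπg)` elsewhere is continuous. If neither `A` nor `B` separated `x`
from `y`, its real lift would have two different increments between `x` and `y`: one computed in
`Bᶜ` with the local lift `-πg` on `Q`, the other in `Aᶜ` with `π(2 - g)` on `Q`. -/
theorem SepPts.of_union {X : Type*} [TopologicalSpace X] [NormalSpace X] [LocallyConnectedSpace X]
    (hcirc : ∀ f : C(X, Circle), f.Nullhomotopic) {A B : Set X} (hA : IsClosed A)
    (hB : IsClosed B) (hAB : Disjoint A B) {x y : X} (h : SepPts (A ∪ B) x y) :
    SepPts A x y ∨ SepPts B x y := by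
  by_contra! hcon
  have hxA : x ∉ A := fun hx => h.1 (Or.inl hx)
  have hxB : x ∉ B := fun hx => h.1 (Or.inr hx)
  have hyA : y ∉ A := fun hx => h.2.1 (Or.inl hx)
  have hyB : y ∉ B := fun hx => h.2.1 (Or.inr hx)
  have hTA := mem_component_of_not_sepPts hxA hyA hcon.1
  have hTB := mem_component_of_not_sepPts hxB hyB hcon.2
  obtain ⟨g, hgA, hgB, -⟩ := exists_continuous_zero_one_of_isClosed hA hB hAB
  set Q := connectedComponentIn (A ∪ B)ᶜ y with hQ
  have hyQ : y ∈ Q := mem_connectedComponentIn h.2.1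
  have hxQ : x ∉ Q := fun hx => h.2.2 (connectedComponentIn_eq hx).symm
  have hfr : frontier {z | z ∈ Q} ⊆ A ∪ B :=
    frontier_connectedComponentIn_subset (hA.union hB) y
  let σ : X → ℝ := fun z => if z ∈ Q then -(Real.pi * g z) else Real.pi * g z
  let τ : X → ℝ := fun z => if z ∈ Q then 2 * Real.pi - Real.pi * g z else Real.pi * g z
  have hσ : ContinuousOn σ Bᶜ := by
    refine ContinuousOn.if ?_ (by fun_prop) (by fun_prop)
    rintro z ⟨hzB, hz⟩
    have hz0 : g z = 0 := hgA ((hfr hz).resolve_right hzB)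
    simp [hz0]
  have hτ : ContinuousOn τ Aᶜ := by
    refine ContinuousOn.if ?_ (by fun_prop) (by fun_prop)
    rintro z ⟨hzA, hz⟩
    have hz1 : g z = 1 := hgB ((hfr hz).resolve_left hzA)
    rw [hz1]
    ring
  have hστ : ∀ z, Circle.exp (σ z) = Circle.exp (τ z) := by
    intro z
    by_cases hz : z ∈ Q
    · simp only [σ, τ, if_pos hz]
      rw [Circle.exp_sub, Circle.exp_two_pi, one_div, Circle.exp_neg]
    · simp only [σ, τ, if_neg hz]
  have hf : Continuous fun z => Circle.exp (σ z) := by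
    rw [continuous_iff_continuousAt]
    intro z
    by_cases hz : z ∈ B
    · have hzA : z ∉ A := fun hzA => disjoint_left.mp hAB hzA hz
      simp only [hστ]
      exact Circle.exp.continuous.continuousAt.comp
        (hτ.continuousAt (hA.isOpen_compl.mem_nhds hzA))
    · exact Circle.exp.continuous.continuousAt.comp
        (hσ.continuousAt (hB.isOpen_compl.mem_nhds hz))
  obtain ⟨θ, hθ⟩ := exists_lift_of_nullhomotopic (hcirc ⟨_, hf⟩)
  have e1 := eq_of_circle_exp_eq (isPreconnected_connectedComponentIn (F := Bᶜ) (x := x))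
    θ.continuous.continuousOn (hσ.mono (connectedComponentIn_subset _ _))
    (fun z _ => hθ z) (mem_connectedComponentIn hxB) hTB
  have e2 := eq_of_circle_exp_eq (isPreconnected_connectedComponentIn (F := Aᶜ) (x := x))
    θ.continuous.continuousOn (hτ.mono (connectedComponentIn_subset _ _))
    (fun z _ => (hθ z).trans (hστ z)) (mem_connectedComponentIn hxA) hTA
  simp only [σ, τ, if_pos hyQ, if_neg hxQ] at e1 e2
  linarith [Real.pi_pos]

/-! ### Cross-components of families of connected sets -/

/-- The cross-component of `E` in `𝓐`; the union of its members is `ℷ(E)`. -/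
def crossClass {X : Type*} [TopologicalSpace X] (𝓐 : Set (Set X)) (E : Set X) : Set (Set X) :=
  {C : Set X | C ∈ 𝓐 ∧ CrossSeqFromTo 𝓐 E C}

section CrossClass

variable {X : Type*} [TopologicalSpace X] {𝓐 : Set (Set X)} {E : Set X}

/-- Connected sets cross only by meeting, since a connected set disjoint from `A` lies in a single
component of `Aᶜ`. -/
theorem Crosses.inter_nonempty {A B : Set X} (hB : IsConnected B) (h : Crosses A B) :
    (A ∩ B).Nonempty := by
  rcases h with h | ⟨⟨hBA, x, hx, y, hy, hne⟩, -⟩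
  · exact h
  · exact absurd (connectedComponentIn_eq
      (hB.isPreconnected.subset_connectedComponentIn hx hBA hy)) hne

theorem self_mem_crossClass (hE : E ∈ 𝓐) : E ∈ crossClass 𝓐 E :=
  ⟨hE, 0, fun _ => E, rfl, rfl, fun _ _ => hE, fun i hi => absurd hi (Nat.not_lt_zero i)⟩

theorem mem_crossClass_of_inter {C D : Set X} (hC : C ∈ crossClass 𝓐 E) (hD : D ∈ 𝓐)
    (hCD : (C ∩ D).Nonempty) : D ∈ crossClass 𝓐 E := by
  obtain ⟨-, n, c, h0, hn, hmem, hcr⟩ := hC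
  refine ⟨hD, n + 1, fun i => if i ≤ n then c i else D, by simp [h0], by simp, ?_, ?_⟩
  · intro i _
    by_cases hin : i ≤ n
    · simpa [hin] using hmem i hin
    · simpa [hin] using hD
  · intro i hi
    rcases Nat.lt_succ_iff_lt_or_eq.mp hi with hin | rfl
    · have h1 : i + 1 ≤ n := hin
      simpa [hin.le, h1] using hcr i hin
    · have hcross : Crosses C D := Or.inl hCD
      simpa [hn] using hcross

theorem isPreconnected_sUnion_crossClass (hconn : ∀ A ∈ 𝓐, IsConnected A) (hE : E ∈ 𝓐) :
    IsPreconnected (⋃₀ crossClass 𝓐 E) := by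
  obtain ⟨x, hx⟩ := (hconn E hE).nonempty
  refine isPreconnected_of_forall x ?_
  rintro y ⟨C, ⟨-, n, c, h0, hn, hmem, hcr⟩, hy⟩
  have key : ∀ k ≤ n, c k ∈ crossClass 𝓐 E ∧
      ∃ t ⊆ ⋃₀ crossClass 𝓐 E, x ∈ t ∧ c k ⊆ t ∧ IsPreconnected t := by
    intro k
    induction k with
    | zero =>
      intro _
      rw [h0]
      exact ⟨self_mem_crossClass hE, E, subset_sUnion_of_mem (self_mem_crossClass hE), hx,
        Subset.rfl, (hconn E hE).isPreconnected⟩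
    | succ k ih =>
      intro hk
      obtain ⟨hck, t, hts, hxt, hct, ht⟩ := ih (by omega)
      have hD := hmem (k + 1) hk
      have hne := (hcr k (by omega)).inter_nonempty (hconn _ hD)
      have hDc := mem_crossClass_of_inter hck hD hne
      refine ⟨hDc, t ∪ c (k + 1), union_subset hts (subset_sUnion_of_mem hDc), Or.inl hxt,
        subset_union_right, ?_⟩
      obtain ⟨z, hz1, hz2⟩ := hne
      exact ht.union z (hct hz1) hz2 (hconn _ hD).isPreconnected
  obtain ⟨-, t, hts, hxt, hct, ht⟩ := key n le_rfl
  exact ⟨t, hts, hxt, hct (hn ▸ hy), ht⟩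

theorem disjoint_sUnion_crossClass {D : Set X} (hD : D ∈ 𝓐) (hDc : D ∉ crossClass 𝓐 E) :
    Disjoint (⋃₀ crossClass 𝓐 E) D := by
  rw [disjoint_left]
  rintro z ⟨C, hC, hzC⟩ hzD
  exact hDc (mem_crossClass_of_inter hC hD ⟨z, hzC, hzD⟩)

end CrossClass

/-! ### Separation by finitely many members of a family -/

/-- If finitely many members of `K` suffice to separate `e` from each single point of a compact set,
then finitely many suffice to separate `e` from the whole set. -/
theorem exists_finite_component_disjoint {X : Type*} [TopologicalSpace X] [LocallyConnectedSpace X]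
    {K : Set (Set X)} (hK : ∀ C ∈ K, IsClosed C) {e : X} {F : Set X} (hF : IsCompact F)
    (h : ∀ q ∈ F, ∃ 𝓑 ⊆ K, 𝓑.Finite ∧ SepPts (⋃₀ 𝓑) e q) :
    ∃ 𝓑 ⊆ K, 𝓑.Finite ∧ e ∉ ⋃₀ 𝓑 ∧ Disjoint (connectedComponentIn (⋃₀ 𝓑)ᶜ e) F := by
  refine hF.induction_on (p := fun F => ∃ 𝓑 ⊆ K, 𝓑.Finite ∧ e ∉ ⋃₀ 𝓑 ∧
    Disjoint (connectedComponentIn (⋃₀ 𝓑)ᶜ e) F) ?_ ?_ ?_ ?_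
  · exact ⟨∅, empty_subset _, finite_empty, by simp, disjoint_empty _⟩
  · rintro s t hst ⟨𝓑, h1, h2, h3, h4⟩
    exact ⟨𝓑, h1, h2, h3, h4.mono_right hst⟩
  · rintro s t ⟨𝓑, h1, h2, h3, h4⟩ ⟨𝓒, k1, k2, k3, k4⟩
    refine ⟨𝓑 ∪ 𝓒, union_subset h1 k1, h2.union k2, ?_, ?_⟩
    · rw [sUnion_union]
      exact fun h => h.elim h3 k3
    · rw [disjoint_union_right]
      exact ⟨h4.mono_left (connectedComponentIn_mono _
          (compl_subset_compl.mpr (sUnion_mono subset_union_left))),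
        k4.mono_left (connectedComponentIn_mono _
          (compl_subset_compl.mpr (sUnion_mono subset_union_right)))⟩
  · intro q hq
    obtain ⟨𝓑, h1, h2, h3⟩ := h q hq
    have hcl : IsClosed (⋃₀ 𝓑) := isClosed_sUnion_of_finite h2 fun C hC => hK C (h1 hC)
    refine ⟨connectedComponentIn (⋃₀ 𝓑)ᶜ q, mem_nhdsWithin_of_mem_nhds
      (hcl.isOpen_compl.connectedComponentIn.mem_nhds (mem_connectedComponentIn h3.2.1)),
      𝓑, h1, h2, h3.1, ?_⟩
    rw [disjoint_left]
    intro z hz1 hz2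
    exact h3.2.2 ((connectedComponentIn_eq hz1).trans (connectedComponentIn_eq hz2).symm)

section Gimel

variable {X : Type*} [MetricSpace X] [LocallyConnectedSpace X]
  {𝓐 : Set (Set X)} {E : Set X}

/-- The members of a finite separating family that lie outside the cross-component miss the connected
set `ℷ ∪ {q}`, so by the Janiszewski property the members inside it already separate. -/
theorem exists_sepPts_of_mem_closure (hcirc : ∀ f : C(X, Circle), f.Nullhomotopic)
    (hclosed : ∀ A ∈ 𝓐, IsClosed A) (hconn : ∀ A ∈ 𝓐, IsConnected A) (hfine : FineFam 𝓐)
    (hE : E ∈ 𝓐) {p q : X} (hp : p ∈ ⋃₀ crossClass 𝓐 E) (hq : q ∈ closure (⋃₀ crossClass 𝓐 E))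
    (hpq : p ≠ q) : ∃ 𝓑 ⊆ crossClass 𝓐 E, 𝓑.Finite ∧ SepPts (⋃₀ 𝓑) p q := by
  obtain ⟨𝓒, hC𝓐, hCfin, hsep⟩ := hfine p q hpq
  set K := crossClass 𝓐 E with hK
  have hfin1 : (𝓒 ∩ K).Finite := hCfin.subset inter_subset_left
  have hfin2 : (𝓒 \ K).Finite := hCfin.subset sdiff_subset
  have hcl1 : IsClosed (⋃₀ (𝓒 ∩ K)) :=
    isClosed_sUnion_of_finite hfin1 fun C hC => hclosed C (hC𝓐 hC.1)
  have hcl2 : IsClosed (⋃₀ (𝓒 \ K)) :=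
    isClosed_sUnion_of_finite hfin2 fun C hC => hclosed C (hC𝓐 hC.1)
  have hdisj : Disjoint (⋃₀ K) (⋃₀ (𝓒 \ K)) := by
    rw [disjoint_sUnion_right]
    exact fun D hD => disjoint_sUnion_crossClass (hC𝓐 hD.1) hD.2
  have hunion : ⋃₀ 𝓒 = ⋃₀ (𝓒 ∩ K) ∪ ⋃₀ (𝓒 \ K) := by
    rw [← sUnion_union, inter_union_sdiff]
  rw [hunion] at hsep
  have hd12 := hdisj.mono_left (sUnion_mono (inter_subset_right : 𝓒 ∩ K ⊆ K))
  rcases SepPts.of_union hcirc hcl1 hcl2 hd12 hsep with h | h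
  · exact ⟨𝓒 ∩ K, inter_subset_right, hfin1, h⟩
  · exfalso
    have hT : IsPreconnected (insert q (⋃₀ K)) :=
      (isPreconnected_sUnion_crossClass hconn hE).subset_closure (subset_insert _ _)
        (insert_subset hq subset_closure)
    exact h.notMem_of_isPreconnected hT (disjoint_insert_left.mpr ⟨h.2.1, hdisj⟩)
      (mem_insert_of_mem _ hp) (mem_insert _ _)

/-- A component `V` of the complement of `closure ℷ` does not have a point `p` of `ℷ` on its
frontier: as `p` is not a cut point there is a second frontier point `q`, and any subset of `ℷ`
separating `p` from `q` would have to meet `V`. -/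
theorem notMem_frontier_component (hcut : ∀ x : X, IsPreconnected ({x}ᶜ : Set X))
    (hcirc : ∀ f : C(X, Circle), f.Nullhomotopic)
    (hclosed : ∀ A ∈ 𝓐, IsClosed A) (hconn : ∀ A ∈ 𝓐, IsConnected A)
    (hbig : ∀ A ∈ 𝓐, A.Nontrivial) (hfine : FineFam 𝓐)
    (hE : E ∈ 𝓐) {p y : X} (hp : p ∈ ⋃₀ crossClass 𝓐 E)
    (hy : y ∉ closure (⋃₀ crossClass 𝓐 E)) :
    p ∉ frontier (connectedComponentIn (closure (⋃₀ crossClass 𝓐 E))ᶜ y) := by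
  intro hpV
  set G := ⋃₀ crossClass 𝓐 E with hG
  set V := connectedComponentIn (closure G)ᶜ y with hV
  have hVo : IsOpen V := isClosed_closure.isOpen_compl.connectedComponentIn
  have hVpre : IsPreconnected V := isPreconnected_connectedComponentIn
  have hyV : y ∈ V := mem_connectedComponentIn hy
  have hVG : Disjoint V G := disjoint_left.mpr fun z hz hzG =>
    connectedComponentIn_subset _ _ hz (subset_closure hzG)
  have hfr : frontier V ⊆ closure G := frontier_connectedComponentIn_subset isClosed_closure y
  obtain ⟨q, hqV, hqp⟩ : ∃ q ∈ frontier V, q ≠ p := by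
    by_contra! hall
    obtain ⟨r, hrE, hrp⟩ := (hbig E hE).exists_ne p
    have hpcV : p ∉ V := fun h => disjoint_left.mp hVG h hp
    have hsub : ({p}ᶜ : Set X) ⊆ V := by
      refine (hcut p).subset_of_disjoint_frontier hVo ?_ ⟨y, ?_, hyV⟩
      · rw [disjoint_left]
        exact fun z hz hzV => hz (hall z hzV)
      · exact fun h => hpcV (h ▸ hyV)
    exact disjoint_left.mp hVG (hsub hrp) ⟨E, self_mem_crossClass hE, hrE⟩
  obtain ⟨𝓑, hB, -, hsep⟩ :=
    exists_sepPts_of_mem_closure hcirc hclosed hconn hfine hE hp (hfr hqV) hqp.symm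
  have hT : IsPreconnected (insert p (insert q V)) :=
    hVpre.subset_closure ((subset_insert _ _).trans (subset_insert _ _))
      (insert_subset hpV.1 (insert_subset hqV.1 subset_closure))
  refine hsep.notMem_of_isPreconnected hT ?_ (mem_insert _ _)
    (mem_insert_of_mem _ (mem_insert _ _))
  exact disjoint_insert_left.mpr ⟨hsep.1, disjoint_insert_left.mpr
    ⟨hsep.2.1, hVG.mono_right (sUnion_mono hB)⟩⟩

theorem exists_sepPts [CompactSpace X] (hcut : ∀ x : X, IsPreconnected ({x}ᶜ : Set X))
    (hcirc : ∀ f : C(X, Circle), f.Nullhomotopic)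
    (hclosed : ∀ A ∈ 𝓐, IsClosed A) (hconn : ∀ A ∈ 𝓐, IsConnected A)
    (hbig : ∀ A ∈ 𝓐, A.Nontrivial) (hfine : FineFam 𝓐)
    (hE : E ∈ 𝓐) {e y : X} (he : e ∈ ⋃₀ crossClass 𝓐 E) (hey : e ≠ y) :
    ∃ 𝓑 ⊆ crossClass 𝓐 E, 𝓑.Finite ∧ SepPts (⋃₀ 𝓑) e y := by
  by_cases hy : y ∈ closure (⋃₀ crossClass 𝓐 E)
  · exact exists_sepPts_of_mem_closure hcirc hclosed hconn hfine hE he hy hey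
  have hfrV := notMem_frontier_component hcut hcirc hclosed hconn hbig hfine hE he hy
  set V := connectedComponentIn (closure (⋃₀ crossClass 𝓐 E))ᶜ y with hV
  have hVo : IsOpen V := isClosed_closure.isOpen_compl.connectedComponentIn
  have hyV : y ∈ V := mem_connectedComponentIn hy
  have hfr : frontier V ⊆ closure (⋃₀ crossClass 𝓐 E) :=
    frontier_connectedComponentIn_subset isClosed_closure y
  obtain ⟨𝓑, hB, hBfin, heB, hdisj⟩ := exists_finite_component_disjoint (e := e)
    (fun C hC => hclosed C hC.1) (isClosed_frontier (s := V)).isCompact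
    fun q hq => exists_sepPts_of_mem_closure hcirc hclosed hconn hfine hE he (hfr hq)
      fun h => hfrV (h ▸ hq)
  refine ⟨𝓑, hB, hBfin, sepPts_of_notMem heB
    (fun h => hy (subset_closure (sUnion_mono hB h))) fun hyU => ?_⟩
  have hsub := isPreconnected_connectedComponentIn.subset_of_disjoint_frontier hVo hdisj
    ⟨y, hyU, hyV⟩
  exact connectedComponentIn_subset _ _ (hsub (mem_connectedComponentIn heB)) (subset_closure he)

end Gimel

/-- Claim: each point `e` of `⋃𝓐` has a neighborhood basis of connected open sets
whose boundaries lie in the cross-component `ℷ(e)` of `e`. -/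
theorem gimel_neighborhood_basis {X : Type*} [MetricSpace X] [CompactSpace X]
    [ConnectedSpace X] [LocallyConnectedSpace X]
    (hcut : ∀ x : X, IsPreconnected ({x}ᶜ : Set X))
    (hcirc : ∀ f : C(X, Circle), f.Nullhomotopic)
    (𝓐 : Set (Set X))
    (hclosed : ∀ A ∈ 𝓐, IsClosed A) (hconn : ∀ A ∈ 𝓐, IsConnected A)
    (hbig : ∀ A ∈ 𝓐, A.Nontrivial)
    (hnull : NullFam 𝓐) (hfine : FineFam 𝓐)
    (E : Set X) (hE : E ∈ 𝓐) (e : X) (he : e ∈ E) :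
    ∀ W ∈ 𝓝 e, ∃ U : Set X, IsOpen U ∧ IsConnected U ∧ e ∈ U ∧ U ⊆ W ∧
      frontier U ⊆ ⋃₀ {C : Set X | C ∈ 𝓐 ∧ CrossSeqFromTo 𝓐 E C} := by
  intro W hW
  have heG : e ∈ ⋃₀ crossClass 𝓐 E := ⟨E, self_mem_crossClass hE, he⟩
  have heW : e ∈ interior W := mem_interior_iff_mem_nhds.mpr hW
  obtain ⟨𝓑, hB, hBfin, heB, hdisj⟩ := exists_finite_component_disjoint (e := e)
    (fun C (hC : C ∈ crossClass 𝓐 E) => hclosed C hC.1)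
    (isClosed_frontier (s := interior W)).isCompact fun q hq =>
      exists_sepPts hcut hcirc hclosed hconn hbig hfine hE heG fun h => by
        rw [isOpen_interior.frontier_eq] at hq
        exact hq.2 (h ▸ heW)
  have hcl : IsClosed (⋃₀ 𝓑) := isClosed_sUnion_of_finite hBfin fun C hC => hclosed C (hB hC).1
  have heU : e ∈ connectedComponentIn (⋃₀ 𝓑)ᶜ e := mem_connectedComponentIn heB
  exact ⟨connectedComponentIn (⋃₀ 𝓑)ᶜ e, hcl.isOpen_compl.connectedComponentIn,
    isConnected_connectedComponentIn_iff.mpr heB, heU,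
    (isPreconnected_connectedComponentIn.subset_of_disjoint_frontier isOpen_interior hdisj
      ⟨e, heU, heW⟩).trans interior_subset,
    (frontier_connectedComponentIn_subset hcl e).trans (sUnion_mono hB)⟩
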